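/- Homogeneous straightening of commuting vector fields (even case): let ∇(x) = (w₁x₁,…,wₙxₙ) on ℝⁿ, let U ⊆ ℝⁿ be open, and let X₁,…,X_k (1 ≤ k ≤ n) be smooth vector fields on U which are linearly independent at every point of U, pairwise commute ([Xᵢ, Xⱼ] = 0 for all i,j), and are each homogeneous with respect to ∇ (i.e., [∇, Xᵢ] = cᵢ·Xᵢ for some cᵢ ∈ ℝ). Let x₀ ∈ U be such that either ∇(x₀) = 0 or ∇(x₀) is not in the linear span of X₁(x₀),…,X_k(x₀). Then there exist an open neighbourhood V ⊆ U of x₀, real numbers λ₁,…,λₙ, and smooth functions x¹,…,xⁿ : V → ℝ whose differentials are linearly independent at every point of V, such that Σⱼ wⱼ yⱼ ∂ⱼxᵃ = λₐ·xᵃ on V for each a, and Dxᵃ(y)(Xᵢ(y)) = δᵢᵃ (Kronecker delta) for all y ∈ V, 1 ≤ i ≤ k, 1 ≤ a ≤ n; that is, in the homogeneous coordinates (xᵃ) one has Xᵢ = ∂/∂xⁱ. -/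

import Mathlib

/-!
The coordinates come from flowing out of a slice `σ` through `x₀`, transverse to the fields `X i`,
to which `∇` is tangent and on which `∇` is linear and diagonal in the parameters. If `∇ x₀ = 0`,
the slice is an affine coordinate subspace through `x₀`; otherwise it is the cone swept out by the
dilations `r ^ w` from an affine coordinate subspace through `x₀` transverse to `∇ x₀` and the
`X i x₀`.

The map `(t, z) ↦ exp (∑ i, t i • X i) (σ z)` is then a local diffeomorphism. Commutativity makes
`∂/∂t i` correspond to `X i`, and `[∇, X i] = c i • X i` makes `∇` act on `t i` with weight `-c i`.
Both facts hold because two solutions of the variational equation along an integral curve agree as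
soon as they agree at time `0`. Smooth dependence of the flow and the variational equation are
obtained by applying the implicit function theorem to the Picard operator on `C([0, 1], E)`.
-/

open Set Filter Topology
open scoped ContDiff

universe u

section PostComposition

variable {S : Type*} [TopologicalSpace S] [CompactSpace S]
  {E F : Type u} [NormedAddCommGroup E] [NormedSpace ℝ E] [NormedAddCommGroup F] [NormedSpace ℝ F]

variable (S E F) in
/-- Pointwise evaluation `(A, h) ↦ (s ↦ A s (h s))` of continuous families of operators on
continuous maps, as a bounded bilinear map. The derivative of `β ↦ f ∘ β` has this form. -/
noncomputable def pointwiseApply : C(S, E →L[ℝ] F) →L[ℝ] C(S, E) →L[ℝ] C(S, F) :=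
  LinearMap.mkContinuous₂
    (LinearMap.mk₂ ℝ (fun (A : C(S, E →L[ℝ] F)) (h : C(S, E)) =>
        (⟨fun s => A s (h s), by fun_prop⟩ : C(S, F)))
      (by intros; ext; simp) (by intros; ext; simp) (by intros; ext; simp) (by intros; ext; simp))
    1 fun A h => (ContinuousMap.norm_le _ (by positivity)).mpr fun s => by
      rw [one_mul]
      exact (A s).le_of_opNorm_le_of_le (A.norm_coe_le_norm s) (h.norm_coe_le_norm s)

@[simp]
theorem pointwiseApply_apply (A : C(S, E →L[ℝ] F)) (h : C(S, E)) (s : S) :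
    pointwiseApply S E F A h s = A s (h s) := rfl

theorem eventually_forall_closedBall_norm_sub_le {E G : Type*} [NormedAddCommGroup E]
    [NormedAddCommGroup G] (g : C(E, G)) (α : C(S, E)) {ε : ℝ} (hε : 0 < ε) :
    ∀ᶠ h in 𝓝 (0 : C(S, E)), ∀ s, ∀ x ∈ Metric.closedBall (α s) ‖h‖, ‖g x - g (α s)‖ ≤ ε := by
  obtain ⟨δ, hδ, hball⟩ :=
    Metric.tendsto_nhds_nhds.mp ((ContinuousMap.continuous_postcomp g).tendsto α) ε hε
  filter_upwards [Metric.ball_mem_nhds 0 hδ] with h hh s x hx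
  have hshift : dist (α + ContinuousMap.const S (x - α s)) α < δ := by
    rw [dist_self_add_left]
    refine ((ContinuousMap.norm_le _ (norm_nonneg h)).mpr fun _ => ?_).trans_lt
      (mem_ball_zero_iff.mp hh)
    simpa [dist_eq_norm] using hx
  simpa [dist_eq_norm] using (ContinuousMap.dist_apply_le_dist s).trans (hball hshift).le

theorem hasFDerivAt_postcomp (f : C(E, F)) (f' : C(E, E →L[ℝ] F))
    (hf : ∀ x, HasFDerivAt f (f' x) x) (α : C(S, E)) :
    HasFDerivAt (fun β : C(S, E) => f.comp β) (pointwiseApply S E F (f'.comp α)) α := by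
  rw [hasFDerivAt_iff_isLittleO_nhds_zero, Asymptotics.isLittleO_iff]
  intro ε hε
  filter_upwards [eventually_forall_closedBall_norm_sub_le f' α hε] with h hh
  refine (ContinuousMap.norm_le _ (by positivity)).mpr fun s => ?_
  have hmean := (convex_closedBall (α s) ‖h‖).norm_image_sub_le_of_norm_hasFDerivWithin_le'
    (x := α s) (y := α s + h s) (fun x _ => (hf x).hasFDerivWithinAt) (hh s) (by simp)
    (by simpa [dist_eq_norm] using h.norm_coe_le_norm s)
  rw [add_sub_cancel_left] at hmean
  exact hmean.trans (mul_le_mul_of_nonneg_left (h.norm_coe_le_norm s) hε.le)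

theorem contDiff_nat_postcomp (m : ℕ) {F : Type u} [NormedAddCommGroup F] [NormedSpace ℝ F]
    (f : C(E, F)) (hf : ContDiff ℝ ∞ f) : ContDiff ℝ m fun β : C(S, E) => f.comp β := by
  induction m generalizing F with
  | zero => exact contDiff_zero.mpr (ContinuousMap.continuous_postcomp f)
  | succ m ih =>
    let f' : C(E, E →L[ℝ] F) := ⟨fderiv ℝ f, hf.continuous_fderiv (by simp)⟩
    have hderiv := hasFDerivAt_postcomp (S := S) f f'
      fun x => (hf.differentiable (by simp) x).hasFDerivAt
    refine contDiff_succ_iff_hasFDerivAt.mpr ⟨_, ?_, hderiv⟩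
    exact (pointwiseApply S E F).contDiff.comp (ih f' (hf.fderiv_right (by simp)))

theorem contDiff_postcomp (f : C(E, F)) (hf : ContDiff ℝ ∞ f) :
    ContDiff ℝ ∞ fun β : C(S, E) => f.comp β :=
  contDiff_infty.mpr fun m => contDiff_nat_postcomp m f hf

end PostComposition

section Primitive

open scoped unitInterval

variable {E : Type*} [NormedAddCommGroup E] [NormedSpace ℝ E]

variable (E) in
/-- Integration from `0`, as a bounded operator on continuous paths `[0, 1] → E`. -/
noncomputable def primitive : C(I, E) →L[ℝ] C(I, E) :=
  LinearMap.mkContinuous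
    { toFun α := ⟨fun s => ∫ r in (0 : ℝ)..s, IccExtend zero_le_one α r,
        (intervalIntegral.continuous_primitive
          (fun _ _ => α.continuous.Icc_extend'.intervalIntegrable _ _) 0).comp
          continuous_subtype_val⟩
      map_add' α β := by
        ext s
        exact intervalIntegral.integral_add (α.continuous.Icc_extend'.intervalIntegrable _ _)
          (β.continuous.Icc_extend'.intervalIntegrable _ _)
      map_smul' c α := by
        ext s
        exact intervalIntegral.integral_smul c _ }
    1 fun α => (ContinuousMap.norm_le _ (by positivity)).mpr fun s => by
      refine (intervalIntegral.norm_integral_le_of_norm_le_const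
        fun _ _ => α.norm_coe_le_norm _).trans ?_
      rw [sub_zero, abs_of_nonneg s.2.1, one_mul]
      exact mul_le_of_le_one_right (norm_nonneg _) s.2.2

@[simp]
theorem primitive_apply_zero (δ : C(I, E)) : primitive E δ 0 = 0 :=
  intervalIntegral.integral_same

variable [CompleteSpace E] {γ δ : C(I, E)}

theorem hasDerivAt_of_eq_const_add_primitive {x : E}
    (h : γ = ContinuousMap.const I x + primitive E δ) {s : ℝ} (hs : s ∈ Ioo (0 : ℝ) 1) :
    HasDerivAt (IccExtend zero_le_one γ) (δ ⟨s, Ioo_subset_Icc_self hs⟩) s := by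
  have hδ : Continuous (IccExtend (zero_le_one' ℝ) δ) := δ.continuous.Icc_extend'
  have hderiv := (intervalIntegral.integral_hasDerivAt_right (hδ.intervalIntegrable 0 s)
    (hδ.stronglyMeasurableAtFilter _ _) hδ.continuousAt).const_add x
  rw [IccExtend_of_mem _ _ (Ioo_subset_Icc_self hs)] at hderiv
  refine hderiv.congr_of_eventuallyEq ?_
  filter_upwards [Ioo_mem_nhds hs.1 hs.2] with r hr
  rw [IccExtend_of_mem _ _ (Ioo_subset_Icc_self hr), h]
  rfl

theorem eq_const_add_primitive_of_hasDerivAt {f : ℝ → E} (hγ : ∀ s : I, γ s = f s)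
    (h : ∀ s (hs : s ∈ Ioo (0 : ℝ) 1), HasDerivAt f (δ ⟨s, Ioo_subset_Icc_self hs⟩) s) :
    γ = ContinuousMap.const I (f 0) + primitive E δ := by
  ext1 s
  have hδ : Continuous (IccExtend (zero_le_one' ℝ) δ) := δ.continuous.Icc_extend'
  have hf : ContinuousOn f (Icc 0 1) := continuousOn_iff_continuous_domRestrict.mpr
    (γ.continuous.congr hγ)
  have hftc := intervalIntegral.integral_eq_sub_of_hasDerivAt_of_le s.2.1
    (hf.mono (Icc_subset_Icc_right s.2.2)) (f' := IccExtend (zero_le_one' ℝ) δ)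
    (fun r hr => by
      have hr' : r ∈ Ioo (0 : ℝ) 1 := ⟨hr.1, hr.2.trans_le s.2.2⟩
      rw [IccExtend_of_mem _ _ (Ioo_subset_Icc_self hr')]
      exact h r hr') (hδ.intervalIntegrable _ _)
  change γ s = f 0 + ∫ r in (0 : ℝ)..s, IccExtend (zero_le_one' ℝ) δ r
  rw [hftc, hγ, add_sub_cancel]

end Primitive

section InverseFunction

variable {𝕜 E F : Type*} [RCLike 𝕜] [NormedAddCommGroup E] [NormedSpace 𝕜 E]
  [NormedAddCommGroup F] [NormedSpace 𝕜 F] {n : WithTop ℕ∞} {f : E → F} {U : Set E}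

theorem isOpen_setOf_isInvertible_fderiv [CompleteSpace E] (hU : IsOpen U)
    (hf : ContDiffOn 𝕜 n f U) (hn : n ≠ 0) : IsOpen {x ∈ U | (fderiv 𝕜 f x).IsInvertible} :=
  (hf.continuousOn_fderiv_of_isOpen hU
    (ENat.one_le_iff_ne_zero_withTop.mpr hn)).isOpen_inter_preimage
    hU ContinuousLinearEquiv.isOpen

theorem exists_openPartialHomeomorph_of_isInvertible_fderiv [CompleteSpace E] (hU : IsOpen U)
    (hf : ContDiffOn 𝕜 n f U) (hn : n ≠ 0) {a : E} (ha : a ∈ U)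
    (hinv : (fderiv 𝕜 f a).IsInvertible) :
    ∃ P : OpenPartialHomeomorph E F, a ∈ P.source ∧ P.source ⊆ U ∧ ⇑P = f ∧
      ContDiffOn 𝕜 n P.symm P.target ∧ ∀ x ∈ P.source,
        (fderiv 𝕜 f x).IsInvertible ∧ HasFDerivAt P.symm (fderiv 𝕜 f x).inverse (f x) := by
  have hfat : ∀ x ∈ U, ContDiffAt 𝕜 n f x := fun x hx => hf.contDiffAt (hU.mem_nhds hx)
  have hfderiv : ∀ x ∈ U, HasFDerivAt f (fderiv 𝕜 f x) x := fun x hx =>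
    ((hfat x hx).differentiableAt hn).hasFDerivAt
  obtain ⟨e, he⟩ := hinv
  have hderiv : HasFDerivAt f (e : E →L[𝕜] F) a := he ▸ hfderiv a ha
  have hW := isOpen_setOf_isInvertible_fderiv hU hf hn
  let P := ((hfat a ha).toOpenPartialHomeomorph f hderiv hn).restrOpen _ hW
  have hsource : ∀ x ∈ P.source, x ∈ U ∧ (fderiv 𝕜 f x).IsInvertible := fun x hx => hx.2
  refine ⟨P, ⟨(hfat a ha).mem_toOpenPartialHomeomorph_source hderiv hn, ha, e, he⟩,
    fun x hx => (hsource x hx).1, rfl, fun y hy => ?_, fun x hx => ⟨(hsource x hx).2, ?_⟩⟩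
  · obtain ⟨hyU, e', he'⟩ := hsource _ (P.map_target hy)
    exact (P.contDiffAt_symm hy (he' ▸ hfderiv _ hyU) (hfat _ hyU)).contDiffWithinAt
  · obtain ⟨hxU, e', he'⟩ := hsource x hx
    have hleft : P.symm (f x) = x := P.left_inv hx
    rw [← he', ContinuousLinearMap.inverse_equiv]
    exact P.hasFDerivAt_symm (P.map_source hx) (by rw [hleft, he']; exact hfderiv x hxU)

end InverseFunction

section ImplicitFunction

variable {𝕜 P B F : Type*} [RCLike 𝕜] {n : WithTop ℕ∞}
  [NormedAddCommGroup P] [NormedSpace 𝕜 P]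
  [NormedAddCommGroup B] [NormedSpace 𝕜 B]
  [NormedAddCommGroup F] [NormedSpace 𝕜 F]

theorem contDiffAt_of_eventually_apply_eq [CompleteSpace P] [CompleteSpace B] [CompleteSpace F]
    {f : P × B → F} {α : P → B} {p : P} (hn : n ≠ 0) (hf : ContDiffAt 𝕜 n f (p, α p))
    (hinv : (fderiv 𝕜 f (p, α p) ∘L .inr 𝕜 P B).IsInvertible) (hα : ContinuousAt α p)
    (heq : ∀ᶠ p' in 𝓝 p, f (p', α p') = f (p, α p)) : ContDiffAt 𝕜 n α p := by
  refine (hf.contDiffAt_implicitFunction hn hinv).congr_of_eventuallyEq ?_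
  filter_upwards [heq, (continuousAt_id.prodMk hα).eventually
    (hf.eventually_apply_eq_iff_implicitFunction hn hinv)] with p' hp' hiff
  exact (hiff.mp hp').symm

theorem exists_contDiffOn_implicitFunction [CompleteSpace P] [CompleteSpace B] [CompleteSpace F]
    {f : P × B → F} (hn : n ≠ 0) (hf : ContDiff 𝕜 n f) {p₀ : P} {b₀ : B}
    (hinv : (fderiv 𝕜 f (p₀, b₀) ∘L .inr 𝕜 P B).IsInvertible) :
    ∃ (O : Set P) (α : P → B), IsOpen O ∧ p₀ ∈ O ∧ ContDiffOn 𝕜 n α O ∧ α p₀ = b₀ ∧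
      ∀ p ∈ O, f (p, α p) = f (p₀, b₀) ∧ (fderiv 𝕜 f (p, α p) ∘L .inr 𝕜 P B).IsInvertible := by
  let α := hf.contDiffAt.implicitFunction hn hinv
  have hα₀ : α p₀ = b₀ := hf.contDiffAt.implicitFunction_apply_self hn hinv
  have hαC1 : ContDiffAt 𝕜 1 α p₀ := (hf.contDiffAt.contDiffAt_implicitFunction hn hinv).of_le
    (ENat.one_le_iff_ne_zero_withTop.mpr hn)
  have hinv_near : ∀ᶠ p in 𝓝 p₀, (fderiv 𝕜 f (p, α p) ∘L .inr 𝕜 P B).IsInvertible := by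
    have hcont : Continuous fun q => fderiv 𝕜 f q ∘L .inr 𝕜 P B :=
      (hf.continuous_fderiv hn).clm_comp continuous_const
    exact (continuousAt_id.prodMk hαC1.continuousAt).eventually
      ((ContinuousLinearEquiv.isOpen.preimage hcont).mem_nhds (by simp only [id, hα₀]; exact hinv))
  obtain ⟨O, hO, hOo, hp₀⟩ := eventually_nhds_iff.mp ((hαC1.eventually (by simp)).and
    ((hf.contDiffAt.eventually_apply_implicitFunction hn hinv).and hinv_near))
  refine ⟨O, α, hOo, hp₀, fun p hp => ContDiffAt.contDiffWithinAt ?_, hα₀, fun p hp => (hO p hp).2⟩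
  refine contDiffAt_of_eventually_apply_eq hn hf.contDiffAt (hO p hp).2.2
    (hO p hp).1.continuousAt ?_
  filter_upwards [hOo.mem_nhds hp] with p' hp'
  exact (hO p' hp').2.1.trans (hO p hp).2.1.symm

theorem fderiv_apply_eq_of_fderiv_fixedPoint {K : P × B → B} {α : P → B} {p : P}
    (hK : DifferentiableAt 𝕜 K (p, α p))
    (hinv : (.id 𝕜 B - fderiv 𝕜 K (p, α p) ∘L .inr 𝕜 P B).IsInvertible)
    (hα : DifferentiableAt 𝕜 α p) (hfix : ∀ᶠ p' in 𝓝 p, K (p', α p') = α p') {d : P} {b : B}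
    (hb : fderiv 𝕜 K (p, α p) (d, b) = b) : fderiv 𝕜 α p d = b := by
  have hchain : fderiv 𝕜 K (p, α p) (d, fderiv 𝕜 α p d) = fderiv 𝕜 α p d :=
    DFunLike.congr_fun (((hK.hasFDerivAt.comp p
      ((hasFDerivAt_id p).prodMk hα.hasFDerivAt)).congr_of_eventuallyEq
        (hfix.mono fun _ h => h.symm)).unique hα.hasFDerivAt) d
  have hsub : fderiv 𝕜 K (p, α p) (0, fderiv 𝕜 α p d - b) = fderiv 𝕜 α p d - b := by
    rw [← sub_self d, ← Prod.mk_sub_mk, map_sub, hchain, hb]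
  refine hinv.injective (sub_eq_zero.mp ?_)
  rw [← map_sub]
  simp [hsub]

theorem exists_contDiffOn_fixedPoint [CompleteSpace P] [CompleteSpace B] {K : P × B → B}
    (hn : n ≠ 0) (hK : ContDiff 𝕜 n K) {p₀ : P} {b₀ : B} (hfix : K (p₀, b₀) = b₀)
    (hinv : (.id 𝕜 B - fderiv 𝕜 K (p₀, b₀) ∘L .inr 𝕜 P B).IsInvertible) :
    ∃ (O : Set P) (α : P → B), IsOpen O ∧ p₀ ∈ O ∧ ContDiffOn 𝕜 n α O ∧ α p₀ = b₀ ∧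
      ∀ p ∈ O, K (p, α p) = α p ∧
        ∀ d b, fderiv 𝕜 K (p, α p) (d, b) = b → fderiv 𝕜 α p d = b := by
  have hdiff : ∀ q, fderiv 𝕜 (fun q : P × B => q.2 - K q) q ∘L .inr 𝕜 P B =
      .id 𝕜 B - fderiv 𝕜 K q ∘L .inr 𝕜 P B := by
    intro q
    rw [(hasFDerivAt_snd.fun_sub (hK.differentiable hn q).hasFDerivAt).fderiv]
    rfl
  obtain ⟨O, α, hO, hp₀, hα, hα₀, hfixO⟩ := exists_contDiffOn_implicitFunction hn
    (contDiff_snd.sub hK) ((hdiff (p₀, b₀)).symm ▸ hinv)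
  simp only [hdiff, hfix, sub_self, sub_eq_zero, eq_comm (b := K _)] at hfixO
  exact ⟨O, α, hO, hp₀, hα, hα₀, fun p hp => ⟨(hfixO p hp).1, fun d b =>
    fderiv_apply_eq_of_fderiv_fixedPoint (hK.differentiable hn _) (hfixO p hp).2
      ((hα.differentiableOn hn).differentiableAt (hO.mem_nhds hp))
      ((hO.eventually_mem hp).mono fun p' hp' => (hfixO p' hp').1)⟩⟩

end ImplicitFunction

section PicardMap

open scoped unitInterval

variable {E V : Type u} [NormedAddCommGroup E] [NormedSpace ℝ E]
  [NormedAddCommGroup V] [NormedSpace ℝ V]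

/-- The Picard operator of the differential equation `γ' = X γ t`, `γ 0 = x` on `[0, 1]`, with the
initial value `x` and the direction `t` as parameters. -/
noncomputable def picardMap (X : C(E, V →L[ℝ] E)) (q : (E × V) × C(I, E)) : C(I, E) :=
  ContinuousLinearMap.const ℝ I q.1.1 +
    primitive E (pointwiseApply I V E (X.comp q.2) (ContinuousLinearMap.const ℝ I q.1.2))

theorem contDiff_picardMap {X : C(E, V →L[ℝ] E)} (hX : ContDiff ℝ ∞ X) :
    ContDiff ℝ ∞ (picardMap X) := by
  have hcomp : ContDiff ℝ ∞ fun q : (E × V) × C(I, E) => X.comp q.2 :=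
    (contDiff_postcomp X hX).comp contDiff_snd
  unfold picardMap
  fun_prop

theorem fderiv_picardMap_apply {X : C(E, V →L[ℝ] E)} {X' : C(E, E →L[ℝ] V →L[ℝ] E)}
    (hX : ∀ x, HasFDerivAt X (X' x) x) (x : E) (t : V) (β : C(I, E)) (u : E) (v : V) (J : C(I, E)) :
    fderiv ℝ (picardMap X) ((x, t), β) ((u, v), J) = ContinuousMap.const I u + primitive E
      (pointwiseApply I V E (pointwiseApply I E (V →L[ℝ] E) (X'.comp β) J)
          (ContinuousMap.const I t) +
        pointwiseApply I V E (X.comp β) (ContinuousMap.const I v)) := by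
  have hinit := (ContinuousLinearMap.const ℝ I ∘L .fst ℝ E V ∘L
    .fst ℝ (E × V) C(I, E)).hasFDerivAt (x := ((x, t), β))
  have hdir := (ContinuousLinearMap.const ℝ I ∘L .snd ℝ E V ∘L
    .fst ℝ (E × V) C(I, E)).hasFDerivAt (x := ((x, t), β))
  have hsnd : HasFDerivAt Prod.snd (.snd ℝ (E × V) C(I, E)) ((x, t), β) := hasFDerivAt_snd
  have hframe := (hasFDerivAt_postcomp X X' hX β).comp ((x, t), β) hsnd
  have hK : HasFDerivAt (picardMap X) _ ((x, t), β) := hinit.add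
    ((primitive E).hasFDerivAt.comp ((x, t), β)
      ((pointwiseApply I V E).hasFDerivAt_of_bilinear hframe hdir))
  rw [hK.fderiv, add_comm (pointwiseApply I V E _ _)]
  rfl

theorem fderiv_picardMap_apply_eq_self [CompleteSpace E] {X : C(E, V →L[ℝ] E)}
    {X' : C(E, E →L[ℝ] V →L[ℝ] E)} (hX : ∀ x, HasFDerivAt X (X' x) x) {p : E × V} {β : C(I, E)}
    {J : ℝ → E} {v : V} (hJ : ContinuousOn J (Icc 0 1))
    (hJ' : ∀ s ∈ Ioo (0 : ℝ) 1, HasDerivAt J (X' (IccExtend zero_le_one β s) (J s) p.2 +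
      X (IccExtend zero_le_one β s) v) s) :
    fderiv ℝ (picardMap X) (p, β) ((J 0, v), ⟨fun s : I => J s, hJ.domRestrict⟩) =
      ⟨fun s : I => J s, hJ.domRestrict⟩ := by
  rw [fderiv_picardMap_apply hX]
  refine (eq_const_add_primitive_of_hasDerivAt (fun _ => rfl) fun s hs => ?_).symm
  have hderiv := hJ' s hs
  rwa [IccExtend_of_mem _ _ (Ioo_subset_Icc_self hs)] at hderiv

theorem exists_contDiffOn_fixedPoint_picardMap [CompleteSpace E] [CompleteSpace V]
    {X : C(E, V →L[ℝ] E)} (hX : ContDiff ℝ ∞ X) (x₀ : E) :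
    ∃ (O : Set (E × V)) (α : E × V → C(I, E)), IsOpen O ∧ (x₀, 0) ∈ O ∧ ContDiffOn ℝ ∞ α O ∧
      α (x₀, 0) = ContinuousMap.const I x₀ ∧ ∀ p ∈ O, picardMap X (p, α p) = α p ∧
        ∀ d J, fderiv ℝ (picardMap X) (p, α p) (d, J) = J → fderiv ℝ α p d = J := by
  have hX' : ∀ x, HasFDerivAt X
      ((⟨fderiv ℝ X, hX.continuous_fderiv (by simp)⟩ : C(E, E →L[ℝ] V →L[ℝ] E)) x) x :=
    fun x => (hX.differentiable (by simp) x).hasFDerivAt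
  refine exists_contDiffOn_fixedPoint (by simp) (contDiff_picardMap hX) ?_ ?_
  · ext s
    simp [picardMap]
  · have hpartial : fderiv ℝ (picardMap X) ((x₀, 0), ContinuousMap.const I x₀) ∘L
        .inr ℝ (E × V) C(I, E) = 0 := by
      refine ContinuousLinearMap.ext fun J => ?_
      simp only [ContinuousLinearMap.comp_apply, ContinuousLinearMap.inr_apply]
      rw [show (0 : E × V) = (0, 0) from rfl, fderiv_picardMap_apply hX']
      simp
    rw [hpartial, sub_zero]
    exact ⟨.refl ℝ _, rfl⟩

end PicardMap

section LocalExponential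

open scoped unitInterval

variable {E V : Type u} [NormedAddCommGroup E] [NormedSpace ℝ E]
  [NormedAddCommGroup V] [NormedSpace ℝ V] {X : E → V →L[ℝ] E} {U : Set E} {O : Set (E × V)}
  {γ : E × V → ℝ → E}

/-- `γ (x, t)` is, for `(x, t)` in the open set `O`, an integral curve in `U` over `[0, 1]` of the
vector field `y ↦ X y t` starting at `x`, and the time-one map `(x, t) ↦ γ (x, t) 1` is smooth with
its derivative computed by solving the variational equation. The family of vector fields is encoded
by the operators `X y`, so that the field attached to `t` is linear in `t`. -/
structure IsLocalExp (X : E → V →L[ℝ] E) (U : Set E) (O : Set (E × V)) (γ : E × V → ℝ → E) :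
    Prop where
  isOpen : IsOpen O
  contDiffOn : ContDiffOn ℝ ∞ (fun p => γ p 1) O
  continuous : ∀ p ∈ O, Continuous (γ p)
  mem : ∀ p ∈ O, ∀ s, γ p s ∈ U
  apply_zero : ∀ p ∈ O, γ p 0 = p.1
  hasDerivAt : ∀ p ∈ O, ∀ s ∈ Ioo (0 : ℝ) 1, HasDerivAt (γ p) (X (γ p s) p.2) s
  fderiv_eq_of_variation : ∀ p ∈ O, ∀ (J : ℝ → E) (v : V), ContinuousOn J (Icc 0 1) →
    (∀ s ∈ Ioo (0 : ℝ) 1, HasDerivAt J (fderiv ℝ X (γ p s) (J s) p.2 + X (γ p s) v) s) →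
      fderiv ℝ (fun p => γ p 1) p (J 0, v) = J 1

theorem exists_isLocalExp_of_contDiff [CompleteSpace E] [CompleteSpace V] (hX : ContDiff ℝ ∞ X)
    (hU : IsOpen U) {x₀ : E} (hx₀ : x₀ ∈ U) : ∃ O γ, IsLocalExp X U O γ ∧ (x₀, 0) ∈ O := by
  let Xc : C(E, V →L[ℝ] E) := ⟨X, hX.continuous⟩
  let X' : C(E, E →L[ℝ] V →L[ℝ] E) := ⟨fderiv ℝ X, hX.continuous_fderiv (by simp)⟩
  have hX' : ∀ x, HasFDerivAt Xc (X' x) x := fun x =>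
    (hX.differentiable (by simp) x).hasFDerivAt
  obtain ⟨O, α, hO, hmem₀, hα, hα₀, hfix⟩ :=
    exists_contDiffOn_fixedPoint_picardMap (X := Xc) hX x₀
  have hend : (fun p => IccExtend (zero_le_one' ℝ) (α p) 1) =
      ContinuousMap.evalCLM ℝ (1 : I) ∘ α := funext fun p => IccExtend_right _ _
  have hin : IsOpen {β : C(I, E) | MapsTo β univ U} :=
    ContinuousMap.isOpen_setOfPred_mapsTo isCompact_univ hU
  refine ⟨O ∩ α ⁻¹' {β | MapsTo β univ U}, fun p => IccExtend zero_le_one (α p),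
    ⟨hα.continuousOn.isOpen_inter_preimage hO hin, ?_, fun p _ => (α p).continuous.Icc_extend',
      fun p hp s => hp.2 (mem_univ _), ?_, ?_, ?_⟩, hmem₀, ?_⟩
  · rw [hend]
    exact ((ContinuousMap.evalCLM ℝ (1 : I)).contDiff.comp_contDiffOn hα).mono inter_subset_left
  · intro p hp
    rw [IccExtend_left, ← (hfix p hp.1).1]
    change p.1 + primitive E _ 0 = p.1
    rw [primitive_apply_zero, add_zero]
  · intro p hp s hs
    rw [IccExtend_of_mem _ _ (Ioo_subset_Icc_self hs)]
    exact hasDerivAt_of_eq_const_add_primitive (hfix p hp.1).1.symm hs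
  · intro p hp J v hJ hJ'
    have hαp : HasFDerivAt α (fderiv ℝ α p) p :=
      ((hα.differentiableOn (by simp)).differentiableAt (hO.mem_nhds hp.1)).hasFDerivAt
    rw [hend, ((ContinuousMap.evalCLM ℝ (1 : I)).hasFDerivAt.comp p hαp).fderiv]
    change fderiv ℝ α p (J 0, v) 1 = J 1
    rw [(hfix p hp.1).2 _ _ (fderiv_picardMap_apply_eq_self hX' hJ hJ')]
    rfl
  · simp [hα₀, MapsTo, hx₀]

theorem IsLocalExp.congr {Y : E → V →L[ℝ] E} {B : Set E} (h : IsLocalExp Y B O γ) (hB : IsOpen B)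
    (hBU : B ⊆ U) (hXY : EqOn X Y B) : IsLocalExp X U O γ where
  isOpen := h.isOpen
  contDiffOn := h.contDiffOn
  continuous := h.continuous
  mem p hp s := hBU (h.mem p hp s)
  apply_zero := h.apply_zero
  hasDerivAt p hp s hs := by
    rw [hXY (h.mem p hp s)]
    exact h.hasDerivAt p hp s hs
  fderiv_eq_of_variation p hp J v hJ hJ' := by
    refine h.fderiv_eq_of_variation p hp J v hJ fun s hs => ?_
    have hmem := h.mem p hp s
    rw [← hXY hmem, ← (hXY.eventuallyEq_of_mem (hB.mem_nhds hmem)).fderiv_eq]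
    exact hJ' s hs

theorem exists_contDiff_eventuallyEq {E F : Type*} [NormedAddCommGroup E] [NormedSpace ℝ E]
    [HasContDiffBump E] [NormedAddCommGroup F] [NormedSpace ℝ F] {n : ℕ∞} {f : E → F} {U : Set E}
    (hU : IsOpen U) (hf : ContDiffOn ℝ n f U) {x₀ : E} (hx₀ : x₀ ∈ U) :
    ∃ g : E → F, ContDiff ℝ n g ∧ f =ᶠ[𝓝 x₀] g := by
  obtain ⟨r, hr, hrU⟩ := Metric.nhds_basis_closedBall.mem_iff.mp (hU.mem_nhds hx₀)
  let φ : ContDiffBump x₀ := ⟨r / 2, r, by positivity, by linarith⟩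
  refine ⟨fun y => φ y • f y, contDiff_iff_contDiffAt.mpr fun y => ?_, ?_⟩
  · by_cases hy : y ∈ U
    · exact φ.contDiffAt.smul (hf.contDiffAt (hU.mem_nhds hy))
    · have hφ : y ∉ tsupport φ := fun h => hy (hrU (φ.tsupport_eq ▸ h))
      refine (contDiffAt_const (c := (0 : F))).congr_of_eventuallyEq ?_
      filter_upwards [notMem_tsupport_iff_eventuallyEq.mp hφ] with z hz
      simp [hz]
  · filter_upwards [φ.eventuallyEq_one] with y hy
    simp [hy]

theorem exists_isLocalExp [CompleteSpace E] [CompleteSpace V] [HasContDiffBump E] (hU : IsOpen U)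
    (hX : ContDiffOn ℝ ∞ X U) {x₀ : E} (hx₀ : x₀ ∈ U) :
    ∃ O γ, IsLocalExp X U O γ ∧ (x₀, 0) ∈ O := by
  obtain ⟨Y, hY, hXY⟩ := exists_contDiff_eventuallyEq hU hX hx₀
  obtain ⟨B, hB, hBo, hx₀B⟩ := eventually_nhds_iff.mp (hXY.and (hU.mem_nhds hx₀))
  obtain ⟨O, γ, hγ, hmem⟩ := exists_isLocalExp_of_contDiff hY hBo hx₀B
  exact ⟨O, γ, hγ.congr hBo (fun y hy => (hB y hy).2) fun y hy => (hB y hy).1, hmem⟩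

end LocalExponential

section LieBracket

open VectorField

variable {E V : Type*} [NormedAddCommGroup E] [NormedSpace ℝ E] [NormedAddCommGroup V]
  [NormedSpace ℝ V] {X : E → V →L[ℝ] E} {N : E → E} {y : E}

theorem lieBracket_apply_const_right (hX : DifferentiableAt ℝ X y) (v : V) :
    lieBracket ℝ N (fun y => X y v) y = fderiv ℝ X y (N y) v - fderiv ℝ N y (X y v) := by
  simp [lieBracket, fderiv_clm_apply hX (differentiableAt_const v)]

end LieBracket

namespace IsLocalExp

open VectorField

variable {E V : Type u} [NormedAddCommGroup E] [NormedSpace ℝ E]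
  [NormedAddCommGroup V] [NormedSpace ℝ V] {X : E → V →L[ℝ] E} {U : Set E} {O : Set (E × V)}
  {γ : E × V → ℝ → E} {N : E → E} {p : E × V}

theorem apply_one_of_zero [CompleteSpace E] (h : IsLocalExp X U O γ) {x : E} (hx : (x, 0) ∈ O) :
    γ (x, 0) 1 = x := by
  have hderiv : ∀ s ∈ Ioo (0 : ℝ) 1, HasDerivAt (γ (x, 0)) 0 s := fun s hs => by
    simpa using h.hasDerivAt _ hx s hs
  have hftc := intervalIntegral.integral_eq_sub_of_hasDerivAt_of_le zero_le_one
    (h.continuous _ hx).continuousOn hderiv (by simp)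
  rw [intervalIntegral.integral_zero, h.apply_zero _ hx, eq_comm, sub_eq_zero] at hftc
  exact hftc

theorem fderiv_apply_fst_of_zero (h : IsLocalExp X U O γ) {x : E} (hx : (x, 0) ∈ O) (u : E) :
    fderiv ℝ (fun p => γ p 1) (x, 0) (u, 0) = u :=
  h.fderiv_eq_of_variation _ hx (fun _ => u) 0 continuousOn_const fun s _ => by
    simpa using hasDerivAt_const s u

theorem hasDerivAt_vectorField (h : IsLocalExp X U O γ) (hp : p ∈ O) {s : ℝ}
    (hs : s ∈ Ioo (0 : ℝ) 1) (hX : DifferentiableAt ℝ X (γ p s))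
    (hN : DifferentiableAt ℝ N (γ p s)) {c : V}
    (hc : lieBracket ℝ N (fun y => X y p.2) (γ p s) = X (γ p s) c) :
    HasDerivAt (fun s => N (γ p s)) (fderiv ℝ X (γ p s) (N (γ p s)) p.2 - X (γ p s) c) s := by
  rw [← hc, lieBracket_apply_const_right hX, sub_sub_cancel]
  exact hN.hasFDerivAt.comp_hasDerivAt s (h.hasDerivAt p hp s hs)

theorem fderiv_apply_of_lieBracket_eq (h : IsLocalExp X U O γ) (hp : p ∈ O)
    (hX : ∀ y ∈ U, DifferentiableAt ℝ X y) (hN : ∀ y ∈ U, DifferentiableAt ℝ N y) {c : V}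
    (hc : ∀ y ∈ U, lieBracket ℝ N (fun y => X y p.2) y = X y c) :
    fderiv ℝ (fun p => γ p 1) p (N p.1, -c) = N (γ p 1) := by
  have hcont : Continuous fun s => N (γ p s) := continuous_iff_continuousAt.mpr fun s =>
    (hN _ (h.mem p hp s)).continuousAt.comp (h.continuous p hp).continuousAt
  have hJ := h.fderiv_eq_of_variation p hp (fun s => N (γ p s)) (-c) hcont.continuousOn
    fun s hs => by
      have hmem := h.mem p hp s
      rw [map_neg, ← sub_eq_add_neg]
      exact h.hasDerivAt_vectorField hp hs (hX _ hmem) (hN _ hmem) (hc _ hmem)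
  rwa [h.apply_zero p hp] at hJ

theorem fderiv_apply_snd_of_lieBracket_eq_zero (h : IsLocalExp X U O γ) (hp : p ∈ O)
    (hX : ∀ y ∈ U, DifferentiableAt ℝ X y) (v : V)
    (hv : ∀ y ∈ U, lieBracket ℝ (fun y => X y v) (fun y => X y p.2) y = 0) :
    fderiv ℝ (fun p => γ p 1) p (0, v) = X (γ p 1) v := by
  have hXv : ∀ y ∈ U, DifferentiableAt ℝ (fun y => X y v) y := fun y hy =>
    (hX y hy).clm_apply (differentiableAt_const v)
  have hcont : Continuous fun s => X (γ p s) v := continuous_iff_continuousAt.mpr fun s =>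
    (hXv _ (h.mem p hp s)).continuousAt.comp (h.continuous p hp).continuousAt
  -- `s • X (γ p s) v` solves the variational equation, because `X (γ p s) v` solves its
  -- homogeneous part.
  have hJ := h.fderiv_eq_of_variation p hp (fun s => s • X (γ p s) v) v
    (continuous_id.smul hcont).continuousOn fun s hs => by
      have hmem := h.mem p hp s
      have hderiv := h.hasDerivAt_vectorField hp hs (hX _ hmem) (hXv _ hmem) (c := 0)
        (by rw [hv _ hmem, map_zero])
      simpa using (hasDerivAt_id' s).fun_smul hderiv
  simpa using hJ

end IsLocalExp

section FlowOut

open VectorField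

variable {E V : Type u} {Z : Type*} [NormedAddCommGroup E] [NormedSpace ℝ E]
  [NormedAddCommGroup V] [NormedSpace ℝ V] [NormedAddCommGroup Z] [NormedSpace ℝ Z]
  {X : E → V →L[ℝ] E} {U : Set E} {O : Set (E × V)} {γ : E × V → ℝ → E} {N : E → E} {x₀ : E}
  {A : V →L[ℝ] E} {C : V →L[ℝ] V} {M : Z →L[ℝ] Z} {S : Set Z} {z₀ : Z} {σ : Z → E} {q : V × Z}

/-- A parametrised submanifold `σ : S → E` through `x₀ = σ z₀`, transverse there to the range of
`A`, to which the vector field `N` is tangent and on which it is the linear field `M` in the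
parameters. -/
structure IsHomogeneousSlice (N : E → E) (x₀ : E) (A : V →L[ℝ] E) (M : Z →L[ℝ] Z) (S : Set Z)
    (z₀ : Z) (σ : Z → E) : Prop where
  isOpen : IsOpen S
  mem : z₀ ∈ S
  contDiffOn : ContDiffOn ℝ ∞ σ S
  apply_base : σ z₀ = x₀
  fderiv_apply : ∀ z ∈ S, fderiv ℝ σ z (M z) = N (σ z)
  isInvertible : (A.coprod (fderiv ℝ σ z₀)).IsInvertible

theorem IsHomogeneousSlice.hasFDerivAt (hσ : IsHomogeneousSlice N x₀ A M S z₀ σ) {z : Z}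
    (hz : z ∈ S) : HasFDerivAt σ (fderiv ℝ σ z) z :=
  ((hσ.contDiffOn.differentiableOn (by simp)).differentiableAt (hσ.isOpen.mem_nhds hz)).hasFDerivAt

/-- Flowing out of the slice `σ`: the time-one map of the local exponential `γ` with initial
values on the slice. -/
def flowOut (γ : E × V → ℝ → E) (σ : Z → E) (q : V × Z) : E := γ (σ q.2, q.1) 1

/-- The pairs `(t, z)` at which `flowOut` is controlled by the domains `O` of the local exponential
and `S` of the slice. -/
def flowOutDomain (O : Set (E × V)) (S : Set Z) (σ : Z → E) : Set (V × Z) :=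
  {q | q.2 ∈ S ∧ (σ q.2, q.1) ∈ O}

theorem contDiffOn_prodMk_slice (hσ : ContDiffOn ℝ ∞ σ S) :
    ContDiffOn ℝ ∞ (fun q : V × Z => (σ q.2, q.1)) (Prod.snd ⁻¹' S) :=
  (hσ.comp contDiff_snd.contDiffOn fun _ hq => hq).prodMk contDiff_fst.contDiffOn

namespace IsLocalExp

theorem isOpen_flowOutDomain (hγ : IsLocalExp X U O γ)
    (hσ : IsHomogeneousSlice N x₀ A M S z₀ σ) : IsOpen (flowOutDomain O S σ) :=
  (contDiffOn_prodMk_slice hσ.contDiffOn).continuousOn.isOpen_inter_preimage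
    (hσ.isOpen.preimage continuous_snd) hγ.isOpen

theorem contDiffOn_flowOut (hγ : IsLocalExp X U O γ) (hσ : IsHomogeneousSlice N x₀ A M S z₀ σ) :
    ContDiffOn ℝ ∞ (flowOut γ σ) (flowOutDomain O S σ) :=
  hγ.contDiffOn.comp ((contDiffOn_prodMk_slice hσ.contDiffOn).mono fun _ hq => hq.1)
    fun _ hq => hq.2

theorem fderiv_flowOut_apply (hγ : IsLocalExp X U O γ) (hσ : IsHomogeneousSlice N x₀ A M S z₀ σ)
    (hq : q ∈ flowOutDomain O S σ) (v : V) (ζ : Z) :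
    fderiv ℝ (flowOut γ σ) q (v, ζ) =
      fderiv ℝ (fun p => γ p 1) (σ q.2, q.1) (fderiv ℝ σ q.2 ζ, v) := by
  have hΦ := ((hγ.contDiffOn.differentiableOn (by simp)).differentiableAt
    (hγ.isOpen.mem_nhds hq.2)).hasFDerivAt
  have hpair : HasFDerivAt (fun q : V × Z => (σ q.2, q.1))
      ((fderiv ℝ σ q.2 ∘L .snd ℝ V Z).prod (.fst ℝ V Z)) q :=
    ((hσ.hasFDerivAt hq.1).comp q hasFDerivAt_snd).prodMk hasFDerivAt_fst
  exact DFunLike.congr_fun (hΦ.comp q hpair).fderiv (v, ζ)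

theorem fderiv_flowOut_apply_fst (hγ : IsLocalExp X U O γ)
    (hσ : IsHomogeneousSlice N x₀ A M S z₀ σ) (hX : ∀ y ∈ U, DifferentiableAt ℝ X y)
    (hcomm : ∀ v t, ∀ y ∈ U, lieBracket ℝ (fun y => X y v) (fun y => X y t) y = 0)
    (hq : q ∈ flowOutDomain O S σ) (v : V) :
    fderiv ℝ (flowOut γ σ) q (v, 0) = X (flowOut γ σ q) v := by
  rw [hγ.fderiv_flowOut_apply hσ hq, map_zero]
  exact hγ.fderiv_apply_snd_of_lieBracket_eq_zero hq.2 hX v (hcomm v q.1)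

theorem fderiv_flowOut_apply_linear (hγ : IsLocalExp X U O γ)
    (hσ : IsHomogeneousSlice N x₀ A M S z₀ σ) (hX : ∀ y ∈ U, DifferentiableAt ℝ X y)
    (hN : ∀ y ∈ U, DifferentiableAt ℝ N y)
    (hhom : ∀ t, ∀ y ∈ U, lieBracket ℝ N (fun y => X y t) y = X y (C t))
    (hq : q ∈ flowOutDomain O S σ) :
    fderiv ℝ (flowOut γ σ) q (-C q.1, M q.2) = N (flowOut γ σ q) := by
  rw [hγ.fderiv_flowOut_apply hσ hq, hσ.fderiv_apply _ hq.1]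
  exact hγ.fderiv_apply_of_lieBracket_eq hq.2 hX hN (hhom q.1)

theorem flowOut_base [CompleteSpace E] (hγ : IsLocalExp X U O γ)
    (hσ : IsHomogeneousSlice N x₀ A M S z₀ σ) (hx₀ : (x₀, 0) ∈ O) :
    flowOut γ σ (0, z₀) = x₀ := by
  rw [flowOut, hσ.apply_base, hγ.apply_one_of_zero hx₀]

theorem isInvertible_fderiv_flowOut_base [CompleteSpace E] (hγ : IsLocalExp X U O γ)
    (hσ : IsHomogeneousSlice N x₀ (X x₀) M S z₀ σ) (hX : ∀ y ∈ U, DifferentiableAt ℝ X y)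
    (hcomm : ∀ v t, ∀ y ∈ U, lieBracket ℝ (fun y => X y v) (fun y => X y t) y = 0)
    (hx₀ : (x₀, 0) ∈ O) : (fderiv ℝ (flowOut γ σ) (0, z₀)).IsInvertible := by
  have hmem : (0, z₀) ∈ flowOutDomain O S σ := ⟨hσ.mem, by rwa [hσ.apply_base]⟩
  have hslice : ∀ ζ, fderiv ℝ (flowOut γ σ) (0, z₀) (0, ζ) = fderiv ℝ σ z₀ ζ := fun ζ => by
    rw [hγ.fderiv_flowOut_apply hσ hmem, hσ.apply_base, hγ.fderiv_apply_fst_of_zero hx₀]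
  have hflow := hγ.fderiv_flowOut_apply_fst hσ hX hcomm hmem
  rw [hγ.flowOut_base hσ hx₀] at hflow
  have hcoprod : fderiv ℝ (flowOut γ σ) (0, z₀) = (X x₀).coprod (fderiv ℝ σ z₀) := by
    refine ContinuousLinearMap.ext fun ⟨v, ζ⟩ => ?_
    rw [ContinuousLinearMap.coprod_apply, ← hflow, ← hslice, ← map_add, Prod.mk_add_mk, add_zero,
      zero_add]
  exact hcoprod ▸ hσ.isInvertible

end IsLocalExp

theorem exists_straightening [CompleteSpace E] [CompleteSpace V] [CompleteSpace Z]
    [HasContDiffBump E] (hU : IsOpen U) (hx₀ : x₀ ∈ U) (hX : ContDiffOn ℝ ∞ X U)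
    (hN : DifferentiableOn ℝ N U)
    (hcomm : ∀ v t, ∀ y ∈ U, lieBracket ℝ (fun y => X y v) (fun y => X y t) y = 0)
    (hhom : ∀ t, ∀ y ∈ U, lieBracket ℝ N (fun y => X y t) y = X y (C t))
    (hσ : IsHomogeneousSlice N x₀ (X x₀) M S z₀ σ) :
    ∃ (W : Set E) (g : E → V × Z), IsOpen W ∧ x₀ ∈ W ∧ W ⊆ U ∧ ContDiffOn ℝ ∞ g W ∧
      ∀ y ∈ W, (fderiv ℝ g y).IsInvertible ∧ (∀ v, fderiv ℝ g y (X y v) = (v, 0)) ∧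
        fderiv ℝ g y (N y) = (-C (g y).1, M (g y).2) := by
  have hX' : ∀ y ∈ U, DifferentiableAt ℝ X y := fun y hy =>
    (hX.differentiableOn (by simp)).differentiableAt (hU.mem_nhds hy)
  have hN' : ∀ y ∈ U, DifferentiableAt ℝ N y := fun y hy => hN.differentiableAt (hU.mem_nhds hy)
  obtain ⟨O, γ, hγ, hmem⟩ := exists_isLocalExp hU hX hx₀
  obtain ⟨P, hbase, hsource, hPγ, hsymm, hP⟩ :=
    exists_openPartialHomeomorph_of_isInvertible_fderiv (hγ.isOpen_flowOutDomain hσ)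
      (hγ.contDiffOn_flowOut hσ) (by simp) ⟨hσ.mem, by rwa [hσ.apply_base]⟩
      (hγ.isInvertible_fderiv_flowOut_base hσ hX' hcomm hmem)
  refine ⟨P.target, P.symm, P.open_target, ?_, fun y hy => ?_, hsymm, fun y hy => ?_⟩
  · rw [← hγ.flowOut_base hσ hmem, ← hPγ]
    exact P.map_source hbase
  · rw [← P.right_inv hy, hPγ]
    exact hγ.mem _ (hsource (P.map_target hy)).2 1
  · obtain ⟨q, hq, rfl⟩ : ∃ q ∈ P.source, flowOut γ σ q = y :=
      ⟨P.symm y, P.map_target hy, hPγ ▸ P.right_inv hy⟩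
    obtain ⟨hinv, hderiv⟩ := hP q hq
    have hleft : P.symm (flowOut γ σ q) = q := hPγ ▸ P.left_inv hq
    rw [hderiv.fderiv, hleft]
    refine ⟨hinv.inverse, fun v => ?_, ?_⟩
    · rw [← hγ.fderiv_flowOut_apply_fst hσ hX' hcomm (hsource hq), hinv.inverse_apply_self]
    · rw [← hγ.fderiv_flowOut_apply_linear hσ hX' hN' hhom (hsource hq), hinv.inverse_apply_self]

end FlowOut

section Frame

open VectorField

/-- The diagonal vector field `y ↦ (w i * y i)ᵢ` with weights `w`. -/
noncomputable abbrev weightField {ι : Type*} [Fintype ι] (w : ι → ℝ) : (ι → ℝ) →L[ℝ] (ι → ℝ) :=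
  ContinuousLinearMap.mul ℝ (ι → ℝ) w

theorem lieBracket_weightField {ι : Type*} [Fintype ι] (w : ι → ℝ) (X : (ι → ℝ) → ι → ℝ)
    (y : ι → ℝ) : lieBracket ℝ (weightField w) X y =
      fderiv ℝ X y (weightField w y) - weightField w (X y) := by
  rw [lieBracket, ContinuousLinearMap.fderiv]

variable {ι E : Type*} [Fintype ι] [DecidableEq ι] [NormedAddCommGroup E] [NormedSpace ℝ E]

/-- The operator `t ↦ ∑ i, t i • v i`; it packages `k` vector fields into a single operator-valued
map `y ↦ frame fun i => X i y`. -/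
noncomputable def frame (v : ι → E) : (ι → ℝ) →L[ℝ] E :=
  (ContinuousLinearEquiv.piRing (𝕜 := ℝ) (E := E) ι).symm v

theorem frame_apply (v : ι → E) (t : ι → ℝ) : frame v t = ∑ i, t i • v i :=
  LinearEquiv.piRing_symm_apply (S := ℝ) v t

@[simp]
theorem frame_single (v : ι → E) (i : ι) : frame v (Pi.single i 1) = v i := by
  simp [frame_apply, Pi.single_apply]

variable {U : Set E} {X : ι → E → E} {N : E → E} {c : ι → ℝ} {y : E}

theorem contDiffOn_frame (hX : ∀ i, ContDiffOn ℝ ∞ (X i) U) :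
    ContDiffOn ℝ ∞ (fun y => frame fun i => X i y) U :=
  (ContinuousLinearEquiv.piRing (𝕜 := ℝ) (E := E) ι).symm.contDiff.comp_contDiffOn
    (contDiffOn_pi.mpr hX)

theorem lieBracket_frame_right (hX : ∀ i, DifferentiableAt ℝ (X i) y) (t : ι → ℝ) :
    lieBracket ℝ N (fun y => frame (fun i => X i y) t) y =
      frame (fun i => lieBracket ℝ N (X i) y) t := by
  have hderiv : HasFDerivAt (fun y => frame (fun i => X i y) t)
      (∑ i, t i • fderiv ℝ (X i) y) y := by
    simp only [frame_apply]
    exact HasFDerivAt.fun_sum fun i _ => (hX i).hasFDerivAt.const_smul (t i)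
  simp only [lieBracket, hderiv.fderiv]
  simp [frame_apply, smul_sub]

theorem lieBracket_frame_frame_eq_zero (hX : ∀ i, DifferentiableAt ℝ (X i) y)
    (hcomm : ∀ i j, lieBracket ℝ (X i) (X j) y = 0) (s t : ι → ℝ) :
    lieBracket ℝ (fun y => frame (fun i => X i y) s) (fun y => frame (fun i => X i y) t) y = 0 := by
  rw [lieBracket_frame_right hX, frame_apply]
  refine Finset.sum_eq_zero fun j _ => ?_
  rw [lieBracket_swap, lieBracket_frame_right hX, frame_apply]
  simp [hcomm]

theorem lieBracket_frame_of_lieBracket_eq_smul (hX : ∀ i, DifferentiableAt ℝ (X i) y)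
    (hhom : ∀ i, lieBracket ℝ N (X i) y = c i • X i y) (t : ι → ℝ) :
    lieBracket ℝ N (fun y => frame (fun i => X i y) t) y =
      frame (fun i => X i y) (weightField c t) := by
  rw [lieBracket_frame_right hX]
  simp only [hhom, frame_apply, smul_smul, ContinuousLinearMap.mul_apply', Pi.mul_apply, mul_comm]

end Frame

section Transversal

open Module

theorem exists_basis_coe_eq_sumElim {K E ι : Type*} {β : Type u} [DivisionRing K] [AddCommGroup E]
    [Module K E] {v : ι → E} (hv : LinearIndependent K v) {b : β → E}
    (hb : Submodule.span K (range b) = ⊤) :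
    ∃ (κ : Type u) (a : κ → β) (B : Basis (ι ⊕ κ) K E),
      Function.Injective a ∧ ⇑B = Sum.elim v (b ∘ a) := by
  set W := Submodule.span K (range v)
  obtain ⟨κ, a, ha, hspan, hind⟩ := exists_linearIndependent' K (W.mkQ ∘ b)
  have hquot : Submodule.map W.mkQ (Submodule.span K (range (b ∘ a))) = ⊤ := by
    rw [Submodule.map_span, ← range_comp, ← Function.comp_assoc, hspan, range_comp,
      ← Submodule.map_span, hb, Submodule.map_top, Submodule.range_mkQ]
  have hsum : LinearIndependent K (Sum.elim v (b ∘ a)) :=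
    LinearIndependent.sumElim_of_quotient (M' := W)
      (f := fun i => ⟨v i, Submodule.subset_span ⟨i, rfl⟩⟩)
      (LinearIndependent.of_comp W.subtype hv) (b ∘ a) hind
  refine ⟨κ, a, Basis.mk hsum ?_, ha, Basis.coe_mk _ _⟩
  rw [Sum.elim_range, Submodule.span_union, (Submodule.map_mkQ_eq_top _ _).mp hquot]

theorem isInvertible_coprod_of_basis {ι κ E : Type*} [Finite ι] [Finite κ] [DecidableEq ι]
    [DecidableEq κ] [NormedAddCommGroup E] [NormedSpace ℝ E] (B : Basis (ι ⊕ κ) ℝ E)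
    {A : (ι → ℝ) →L[ℝ] E} {F : (κ → ℝ) →L[ℝ] E} (hA : ∀ i, A (Pi.single i 1) = B (.inl i))
    (hF : ∀ j, F (Pi.single j 1) = B (.inr j)) : (A.coprod F).IsInvertible := by
  have := Fintype.ofFinite ι
  have := Fintype.ofFinite κ
  have : FiniteDimensional ℝ E := B.finiteDimensional_of_finite
  let b := (Pi.basisFun ℝ ι).prod (Pi.basisFun ℝ κ)
  refine ⟨(b.equiv B (.refl _)).toContinuousLinearEquiv, ContinuousLinearMap.coe_injective
    (b.ext fun k => (b.equiv_apply k B (.refl _)).trans ?_)⟩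
  rcases k with i | j
  · simp [b, hA]
  · simp [b, hF]

end Transversal

section Slice

variable {α : Type u} {κ : Type*} {w x₀ : α → ℝ}

/-- The diagonal of the dilation `y ↦ (r ^ w j * y j)ⱼ`, the flow of `weightField w` at time
`log r`. -/
noncomputable def dilation (w : α → ℝ) (r : ℝ) : α → ℝ := fun j => r ^ w j

@[simp]
theorem dilation_one (w : α → ℝ) : dilation w 1 = 1 := by
  ext j
  simp [dilation]

/-- The cone `(r, z) ↦ r ^ w * (x₀ + L z)` swept out by the dilations from the affine space
`x₀ + range L`; the parameter `r` is the coordinate indexed by `Unit`. -/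
noncomputable def dilatedSlice (w x₀ : α → ℝ) (L : (κ → ℝ) →L[ℝ] (α → ℝ)) (z : Unit ⊕ κ → ℝ) :
    α → ℝ :=
  dilation w (z (.inl ())) * (x₀ + L (z ∘ Sum.inr))

theorem dilatedSlice_base (w x₀ : α → ℝ) (L : (κ → ℝ) →L[ℝ] (α → ℝ)) :
    dilatedSlice w x₀ L (Sum.elim 1 0) = x₀ := by
  simp [dilatedSlice]

variable [Fintype α]

theorem hasDerivAt_dilation (w : α → ℝ) {r : ℝ} (hr : 0 < r) :
    HasDerivAt (dilation w) (r⁻¹ • weightField w (dilation w r)) r :=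
  hasDerivAt_pi.mpr fun j => by
    have hcoeff : r⁻¹ * (w j * r ^ w j) = w j * r ^ (w j - 1) := by
      rw [Real.rpow_sub_one hr.ne']
      ring
    have hpow := Real.hasDerivAt_rpow_const (p := w j) (Or.inl hr.ne')
    rwa [← hcoeff] at hpow

theorem contDiffOn_dilation (w : α → ℝ) : ContDiffOn ℝ ∞ (dilation w) (Ioi 0) :=
  contDiffOn_pi.mpr fun _ => contDiffOn_id.rpow_const_of_ne fun _ hr => ne_of_gt hr

theorem fderiv_dilatedSlice_apply [Finite κ] (L : (κ → ℝ) →L[ℝ] (α → ℝ)) {z : Unit ⊕ κ → ℝ}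
    (hz : 0 < z (.inl ())) (ζ : Unit ⊕ κ → ℝ) :
    fderiv ℝ (dilatedSlice w x₀ L) z ζ =
      (ζ (.inl ()) / z (.inl ())) • weightField w (dilatedSlice w x₀ L z) +
        dilation w (z (.inl ())) * L (ζ ∘ Sum.inr) := by
  have := Fintype.ofFinite κ
  have hradius := (hasDerivAt_dilation w hz).hasFDerivAt.comp z
    (ContinuousLinearMap.proj (R := ℝ) (φ := fun _ : Unit ⊕ κ => ℝ) (.inl ())).hasFDerivAt
  have hslice := ((L ∘L ContinuousLinearMap.pi fun j => .proj (R := ℝ)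
    (φ := fun _ : Unit ⊕ κ => ℝ) (.inr j)).hasFDerivAt (x := z)).const_add x₀
  have hderiv : HasFDerivAt (dilatedSlice w x₀ L) _ z := hradius.mul hslice
  rw [hderiv.fderiv]
  ext j
  change dilation w (z (.inl ())) j * L (ζ ∘ Sum.inr) j + (x₀ j + L (z ∘ Sum.inr) j) *
      (ζ (.inl ()) * ((z (.inl ()))⁻¹ * (w j * dilation w (z (.inl ())) j))) =
    ζ (.inl ()) / z (.inl ()) * (w j * (dilation w (z (.inl ())) j * (x₀ j + L (z ∘ Sum.inr) j))) +
      dilation w (z (.inl ())) j * L (ζ ∘ Sum.inr) j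
  ring

variable [Fintype κ]

theorem fderiv_dilatedSlice_weightField (L : (κ → ℝ) →L[ℝ] (α → ℝ)) {z : Unit ⊕ κ → ℝ}
    (hz : 0 < z (.inl ())) :
    fderiv ℝ (dilatedSlice w x₀ L) z (weightField (Sum.elim 1 0) z) =
      weightField w (dilatedSlice w x₀ L z) := by
  have hinr : weightField (Sum.elim 1 0) z ∘ Sum.inr = 0 := by
    ext j
    simp
  rw [fderiv_dilatedSlice_apply L hz, hinr]
  simp [hz.ne']

theorem contDiffOn_dilatedSlice (L : (κ → ℝ) →L[ℝ] (α → ℝ)) :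
    ContDiffOn ℝ ∞ (dilatedSlice w x₀ L) {z | 0 < z (.inl ())} := by
  refine ContDiffOn.mul ?_ ?_
  · exact (contDiffOn_dilation w).comp (contDiff_apply ℝ ℝ (Sum.inl ())).contDiffOn fun _ hz => hz
  · exact (contDiff_const.add (L.contDiff.comp
      (contDiff_pi.mpr fun j => contDiff_apply ℝ ℝ (Sum.inr j)))).contDiffOn

theorem weightField_frame_single [DecidableEq α] [DecidableEq κ] (w : α → ℝ) (a : κ → α)
    (z : κ → ℝ) :
    weightField w (frame (fun j => Pi.single (a j) 1) z) =
      frame (fun j => Pi.single (a j) 1) (weightField (w ∘ a) z) := by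
  simp only [frame_apply, map_sum, map_smul]
  refine Finset.sum_congr rfl fun j _ => ?_
  ext i
  by_cases hi : i = a j
  · subst hi
    simp [mul_comm]
  · simp [hi]

variable {ι : Type u} [Fintype ι] [DecidableEq ι] {v : ι → α → ℝ}

theorem exists_isHomogeneousSlice_of_weightField_eq_zero (hv : LinearIndependent ℝ v)
    (hzero : weightField w x₀ = 0) :
    ∃ (κ : Type u) (_ : Fintype κ) (μ : κ → ℝ) (S : Set (κ → ℝ)) (z₀ : κ → ℝ)
      (σ : (κ → ℝ) → α → ℝ),
      IsHomogeneousSlice (weightField w) x₀ (frame v) (weightField μ) S z₀ σ := by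
  classical
  obtain ⟨κ, a, B, ha, hB⟩ := exists_basis_coe_eq_sumElim hv (Pi.basisFun ℝ α).span_eq
  have hκ : Fintype κ := .ofInjective a ha
  let L : (κ → ℝ) →L[ℝ] (α → ℝ) := frame fun j => Pi.single (a j) 1
  have hderiv : ∀ z, fderiv ℝ (fun z => x₀ + L z) z = L := fun z =>
    (L.hasFDerivAt.const_add x₀).fderiv
  refine ⟨κ, hκ, w ∘ a, univ, 0, fun z => x₀ + L z, ⟨isOpen_univ, mem_univ _,
    (contDiff_const.add L.contDiff).contDiffOn, by simp, fun z _ => ?_,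
    isInvertible_coprod_of_basis B (by simp [hB]) (by simp [hB, hderiv, L])⟩⟩
  rw [hderiv, map_add, hzero, zero_add, weightField_frame_single]

theorem exists_isHomogeneousSlice_of_weightField_notMem_span (hv : LinearIndependent ℝ v)
    (hspan : weightField w x₀ ∉ Submodule.span ℝ (range v)) :
    ∃ (κ : Type u) (_ : Fintype κ) (μ : κ → ℝ) (S : Set (κ → ℝ)) (z₀ : κ → ℝ)
      (σ : (κ → ℝ) → α → ℝ),
      IsHomogeneousSlice (weightField w) x₀ (frame v) (weightField μ) S z₀ σ := by
  classical
  have hv' : LinearIndependent ℝ (Sum.elim v fun _ : Unit => weightField w x₀) :=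
    hv.sum_type (.of_subsingleton () fun h => hspan (h ▸ zero_mem _)) <| by
      rw [range_const]
      exact Submodule.disjoint_span_singleton_of_notMem hspan
  obtain ⟨κ, a, B, ha, hB⟩ := exists_basis_coe_eq_sumElim hv' (Pi.basisFun ℝ α).span_eq
  have hκ : Fintype κ := .ofInjective a ha
  let L : (κ → ℝ) →L[ℝ] (α → ℝ) := frame fun j => Pi.single (a j) 1
  have hderiv : ∀ j, fderiv ℝ (dilatedSlice w x₀ L) (Sum.elim 1 0) (Pi.single j 1) =
      B.reindex (.sumAssoc ι Unit κ) (.inr j) := fun j => by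
    rw [fderiv_dilatedSlice_apply L (by simp), dilatedSlice_base]
    rcases j with ⟨⟩ | j
    · simp [hB, ← Sum.elim_single_zero]
    · simp [hB, L, ← Sum.elim_zero_single]
  refine ⟨Unit ⊕ κ, inferInstance, Sum.elim 1 0, {z | 0 < z (.inl ())}, Sum.elim 1 0,
    dilatedSlice w x₀ L,
    ⟨isOpen_lt continuous_const (continuous_apply _), by simp, contDiffOn_dilatedSlice L,
    dilatedSlice_base w x₀ L, fun _ => fderiv_dilatedSlice_weightField L,
    isInvertible_coprod_of_basis (B.reindex (.sumAssoc ι Unit κ)) (by simp [hB]) hderiv⟩⟩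

theorem exists_isHomogeneousSlice (hv : LinearIndependent ℝ v)
    (hx₀ : weightField w x₀ = 0 ∨ weightField w x₀ ∉ Submodule.span ℝ (range v)) :
    ∃ (κ : Type u) (_ : Fintype κ) (μ : κ → ℝ) (S : Set (κ → ℝ)) (z₀ : κ → ℝ)
      (σ : (κ → ℝ) → α → ℝ),
      IsHomogeneousSlice (weightField w) x₀ (frame v) (weightField μ) S z₀ σ :=
  hx₀.elim (exists_isHomogeneousSlice_of_weightField_eq_zero hv)
    (exists_isHomogeneousSlice_of_weightField_notMem_span hv)

end Slice

section Coordinates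

open VectorField

theorem linearIndependent_proj_comp {α E : Type*} [Finite α] [NormedAddCommGroup E]
    [NormedSpace ℝ E] {f : E →L[ℝ] α → ℝ} (hf : Function.Surjective f) :
    LinearIndependent ℝ fun a => ContinuousLinearMap.proj a ∘L f := by
  classical
  have := Fintype.ofFinite α
  refine Fintype.linearIndependent_iff.mpr fun r hr a => ?_
  obtain ⟨u, hu⟩ := hf (Pi.single a 1)
  simpa [hu, Pi.single_apply] using DFunLike.congr_fun hr u

theorem exists_sum_equiv_extending {α ι κ : Type*} [Fintype α] [Fintype ι] [Fintype κ] (f : ι ↪ α)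
    (hcard : Fintype.card ι + Fintype.card κ = Fintype.card α) :
    ∃ e : ι ⊕ κ ≃ α, ∀ i, e (.inl i) = f i := by
  classical
  have hκ : Fintype.card κ = Fintype.card ↑(range f)ᶜ := by
    have := Fintype.card_congr (Equiv.ofInjective f f.injective)
    rw [Fintype.card_compl_set, ← this]
    omega
  exact ⟨((Equiv.ofInjective f f.injective).sumCongr (Fintype.equivOfCardEq hκ)).trans
    (Equiv.Set.sumCompl (range f)), fun i => by simp⟩

variable {E ι : Type u} {κ : Type*} [NormedAddCommGroup E] [NormedSpace ℝ E] [Fintype ι]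
  [Fintype κ] {N : E → E} {x₀ : E} {S : Set (κ → ℝ)} {z₀ : κ → ℝ} {σ : (κ → ℝ) → E}

theorem IsHomogeneousSlice.card_add_card {A : (ι → ℝ) →L[ℝ] E} {M : (κ → ℝ) →L[ℝ] (κ → ℝ)}
    (hσ : IsHomogeneousSlice N x₀ A M S z₀ σ) :
    Fintype.card ι + Fintype.card κ = Module.finrank ℝ E := by
  obtain ⟨e, -⟩ := hσ.isInvertible
  simpa using e.toLinearEquiv.finrank_eq

theorem exists_homogeneous_coordinates [DecidableEq ι] [CompleteSpace E] [HasContDiffBump E]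
    {U : Set E} {X : ι → E → E} {c : ι → ℝ} {μ : κ → ℝ} (hU : IsOpen U) (hx₀ : x₀ ∈ U)
    (hX : ∀ i, ContDiffOn ℝ ∞ (X i) U) (hN : DifferentiableOn ℝ N U)
    (hcomm : ∀ i j, ∀ y ∈ U, lieBracket ℝ (X i) (X j) y = 0)
    (hhom : ∀ i, ∀ y ∈ U, lieBracket ℝ N (X i) y = c i • X i y)
    (hσ : IsHomogeneousSlice N x₀ (frame fun i => X i x₀) (weightField μ) S z₀ σ) :
    ∃ (W : Set E) (x : ι ⊕ κ → E → ℝ), IsOpen W ∧ x₀ ∈ W ∧ W ⊆ U ∧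
      (∀ a, ContDiffOn ℝ ∞ (x a) W) ∧
      ∀ y ∈ W, LinearIndependent ℝ (fun a => fderiv ℝ (x a) y) ∧
        (∀ a, fderiv ℝ (x a) y (N y) = Sum.elim (-c) μ a * x a y) ∧
        ∀ i a, fderiv ℝ (x a) y (X i y) = Sum.elim (Pi.single i 1) 0 a := by
  have hX' : ∀ y ∈ U, ∀ i, DifferentiableAt ℝ (X i) y := fun y hy i =>
    ((hX i).differentiableOn (by simp)).differentiableAt (hU.mem_nhds hy)
  obtain ⟨W, g, hW, hxW, hWU, hg, hstraight⟩ := exists_straightening hU hx₀ (contDiffOn_frame hX) hN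
    (fun s t y hy => lieBracket_frame_frame_eq_zero (hX' y hy) (fun i j => hcomm i j y hy) s t)
    (fun t y hy => lieBracket_frame_of_lieBracket_eq_smul (hX' y hy) (fun i => hhom i y hy) t) hσ
  let T : ((ι → ℝ) × (κ → ℝ)) ≃L[ℝ] (ι ⊕ κ → ℝ) :=
    (ContinuousLinearEquiv.sumPiEquivProdPi ℝ ι κ fun _ => ℝ).symm
  let coord (a : ι ⊕ κ) : (ι → ℝ) × (κ → ℝ) →L[ℝ] ℝ := .proj a ∘L T.toContinuousLinearMap
  have hderiv : ∀ y ∈ W, ∀ a, fderiv ℝ (coord a ∘ g) y = coord a ∘L fderiv ℝ g y := fun y hy a =>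
    ((coord a).hasFDerivAt.comp y
      ((hg.differentiableOn (by simp)).differentiableAt (hW.mem_nhds hy)).hasFDerivAt).fderiv
  refine ⟨W, fun a => coord a ∘ g, hW, hxW, hWU,
    fun a => (coord a).contDiff.comp_contDiffOn hg, fun y hy => ?_⟩
  obtain ⟨hinv, hXg, hNg⟩ := hstraight y hy
  simp only [hderiv y hy]
  refine ⟨linearIndependent_proj_comp (f := T.toContinuousLinearMap ∘L fderiv ℝ g y)
    (T.surjective.comp hinv.surjective), fun a => ?_, fun i a => ?_⟩
  · rw [ContinuousLinearMap.comp_apply, hNg]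
    rcases a with i | j
    · exact (neg_mul _ _).symm
    · rfl
  · rw [ContinuousLinearMap.comp_apply, ← frame_single (fun i => X i y) i, hXg]
    rcases a with j | j <;> rfl

end Coordinates

/-- Homogeneous straightening of commuting vector fields (even case):
pointwise linearly independent, pairwise commuting, homogeneous vector fields
`X₁, …, X_k` can be simultaneously straightened, `Xᵢ = ∂/∂xⁱ`, in a system of
homogeneous coordinates around any point `x₀` where either `∇(x₀) = 0` or `∇(x₀)`
is not in the span of the `Xᵢ(x₀)`. -/
theorem stmt_6 (n k : ℕ) (hk : 1 ≤ k) (hkn : k ≤ n) (w : Fin n → ℝ)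
    (U : Set (Fin n → ℝ)) (hU : IsOpen U)
    (X : Fin k → (Fin n → ℝ) → (Fin n → ℝ))
    (hX : ∀ i, ContDiffOn ℝ (⊤ : ℕ∞) (X i) U)
    (hind : ∀ y ∈ U, LinearIndependent ℝ (fun i => X i y))
    (hcomm : ∀ i j, ∀ y ∈ U,
      fderiv ℝ (X j) y (X i y) - fderiv ℝ (X i) y (X j y) = 0)
    (hhom : ∀ i, ∃ c : ℝ, ∀ y ∈ U,
      fderiv ℝ (X i) y (fun j => w j * y j) - (fun j => w j * X i y j) = c • X i y)
    (x₀ : Fin n → ℝ) (hx₀ : x₀ ∈ U)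
    (hcase : (fun j => w j * x₀ j) = 0 ∨
      (fun j => w j * x₀ j) ∉ Submodule.span ℝ (Set.range fun i => X i x₀)) :
    ∃ (V : Set (Fin n → ℝ)) (lam : Fin n → ℝ) (x : Fin n → (Fin n → ℝ) → ℝ),
      IsOpen V ∧ x₀ ∈ V ∧ V ⊆ U ∧
      (∀ a, ContDiffOn ℝ (⊤ : ℕ∞) (x a) V) ∧
      (∀ y ∈ V, LinearIndependent ℝ (fun a => fderiv ℝ (x a) y)) ∧
      (∀ a, ∀ y ∈ V, fderiv ℝ (x a) y (fun j => w j * y j) = lam a * x a y) ∧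
      (∀ (i : Fin k) (a : Fin n), ∀ y ∈ V,
        fderiv ℝ (x a) y (X i y) = if a = Fin.castLE hkn i then 1 else 0) := by
  choose c hc using hhom
  obtain ⟨κ, _, μ, S, z₀, σ, hσ⟩ := exists_isHomogeneousSlice (hind x₀ hx₀) hcase
  obtain ⟨V, x, hV, hxV, hVU, hsmooth, hx⟩ :=
    exists_homogeneous_coordinates hU hx₀ hX (weightField w).differentiableOn hcomm
      (fun i y hy => (lieBracket_weightField w (X i) y).trans (hc i y hy)) hσ
  obtain ⟨e, he⟩ := exists_sum_equiv_extending (κ := κ) (Fin.castLEEmb hkn)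
    (by simpa using hσ.card_add_card)
  refine ⟨V, fun a => Sum.elim (-c) μ (e.symm a), fun a => x (e.symm a), hV, hxV, hVU,
    fun a => hsmooth _, fun y hy => (hx y hy).1.comp _ e.symm.injective,
    fun a y hy => (hx y hy).2.1 _, fun i a y hy => ?_⟩
  classical
  rw [(hx y hy).2.2, Sum.elim_single_zero, Pi.single_apply]
  simp only [e.symm_apply_eq, he, Fin.castLEEmb_apply]
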